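/- arXiv:1905.02325 — 2 statements merged into one kernel-verified Lean document; each statement's English description precedes it below -/
import Mathlib

section
/- If a univariate real polynomial Q satisfies Q(u) ≥ 0 for all u ∈ ℝ, then there exist real polynomials p₁ and p₂ such that Q = p₁² + p₂², i.e., every real polynomial that is nonnegative on the whole real line is a sum of two squares of real polynomials. -/
/-!
A complex root `a + bi` of a nonnegative nonconstant real polynomial `Q` makes `(X - a)² + b²`
divide `Q`: if `b ≠ 0` the conjugate is a root as well, and if `b = 0` then `Q` has a minimum at
`a`, so its derivative also vanishes there. The quotient is again nonnegative and has smaller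
degree, and sums of two squares are closed under multiplication.
-/

open Polynomial

section CommRing

variable {R : Type*} [CommRing R]

theorem isMonicOfDegree_sq_X_sub_C_add_sq_C [Nontrivial R] (a b : R) :
    IsMonicOfDegree ((X - C a) ^ 2 + C b ^ 2) 2 := by
  refine ((isMonicOfDegree_X_sub_one a).pow 2).add_right ?_
  rw [← C_pow, natDegree_C]
  exact two_pos

theorem sq_X_sub_C_dvd_iff {p : R[X]} {a : R} :
    (X - C a) ^ 2 ∣ p ↔ p.IsRoot a ∧ p.derivative.IsRoot a := by
  rw [X_sub_C_pow_dvd_iff, ← taylor_apply, X_pow_dvd_iff]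
  simp only [Nat.forall_lt_succ_right, Nat.not_lt_zero, IsEmpty.forall_iff, implies_true,
    true_and, taylor_coeff_zero, taylor_coeff_one, IsRoot.def]

end CommRing

theorem eval_nonneg_of_eval_mul_nonneg {𝕜 : Type*} [Field 𝕜] [LinearOrder 𝕜]
    [IsStrictOrderedRing 𝕜] [TopologicalSpace 𝕜] [OrderTopology 𝕜] {p q : 𝕜[X]} (hp : p ≠ 0)
    (hp_nonneg : ∀ u, 0 ≤ p.eval u) (hpq : ∀ u, 0 ≤ (p * q).eval u) (u : 𝕜) :
    0 ≤ q.eval u := by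
  have roots_finite : {x | p.IsRoot x}.Finite := finite_setOfPred_isRoot hp
  have dense_nonroots : Dense {x | p.IsRoot x}ᶜ := by
    simpa only [Set.compl_eq_univ_sdiff] using dense_univ.sdiff_finite roots_finite
  have nonneg_isClosed : IsClosed {x | 0 ≤ q.eval x} := isClosed_le continuous_const q.continuous
  have nonroots_subset : {x | p.IsRoot x}ᶜ ⊆ {x | 0 ≤ q.eval x} := fun x hx =>
    nonneg_of_mul_nonneg_right (by simpa only [eval_mul] using hpq x) ((hp_nonneg x).lt_of_ne' hx)
  exact nonneg_isClosed.closure_subset_iff.2 nonroots_subset (dense_nonroots u)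

theorem sq_X_sub_C_dvd_sub_C_eval_of_isLocalExtr {p : ℝ[X]} {a : ℝ}
    (h : IsLocalExtr (fun x => p.eval x) a) : (X - C a) ^ 2 ∣ p - C (p.eval a) := by
  have derivative_isRoot : p.derivative.eval a = 0 := by
    rw [← p.deriv, h.deriv_eq_zero]
  exact sq_X_sub_C_dvd_iff.2 ⟨by simp, by simpa using derivative_isRoot⟩

theorem sq_X_sub_C_re_add_sq_C_im_dvd_of_im_ne_zero {p : ℝ[X]} {z : ℂ} (hz : aeval z p = 0)
    (him : z.im ≠ 0) : (X - C z.re) ^ 2 + C z.im ^ 2 ∣ p := by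
  convert p.quadratic_dvd_of_aeval_eq_zero_im_ne_zero hz him using 1
  rw [Complex.sq_norm, Complex.normSq_apply]
  simp only [C_mul, C_add, C_ofNat]
  ring

theorem sq_X_sub_C_re_add_sq_C_im_dvd_of_nonneg {p : ℝ[X]} (hp : ∀ u, 0 ≤ p.eval u) {z : ℂ}
    (hz : aeval z p = 0) : (X - C z.re) ^ 2 + C z.im ^ 2 ∣ p := by
  by_cases him : z.im = 0
  · have eval_re : p.eval z.re = 0 := by
      have hz_re : (algebraMap ℝ ℂ) z.re = z :=
        Complex.conj_eq_iff_re.1 (Complex.conj_eq_iff_im.2 him)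
      rwa [← hz_re, aeval_algebraMap_eq_zero_iff, coe_aeval_eq_eval] at hz
    have re_isLocalMin : IsLocalMin (fun x => p.eval x) z.re :=
      .of_forall fun x => eval_re.trans_le (hp x)
    simpa [him, eval_re] using sq_X_sub_C_dvd_sub_C_eval_of_isLocalExtr (.inl re_isLocalMin)
  · exact sq_X_sub_C_re_add_sq_C_im_dvd_of_im_ne_zero hz him

theorem exists_eq_sq_add_sq_mul_of_nonneg {p : ℝ[X]} (hp : ∀ u, 0 ≤ p.eval u)
    (hdeg : p.natDegree ≠ 0) :
    ∃ (a b : ℝ) (q : ℝ[X]), p = ((X - C a) ^ 2 + C b ^ 2) * q ∧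
      q.natDegree < p.natDegree ∧ ∀ u, 0 ≤ q.eval u := by
  obtain ⟨z, hz⟩ := IsAlgClosed.exists_aeval_eq_zero ℂ p (mt natDegree_eq_of_degree_eq_some hdeg)
  obtain ⟨q, rfl⟩ := sq_X_sub_C_re_add_sq_C_im_dvd_of_nonneg hp hz
  have quadratic := isMonicOfDegree_sq_X_sub_C_add_sq_C z.re z.im
  have q_ne_zero : q ≠ 0 := by
    rintro rfl
    simp at hdeg
  refine ⟨z.re, z.im, q, rfl, ?_, eval_nonneg_of_eval_mul_nonneg quadratic.ne_zero ?_ hp⟩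
  · rw [natDegree_mul quadratic.ne_zero q_ne_zero, quadratic.natDegree_eq]
    lia
  · intro u
    simp only [eval_add, eval_pow, eval_sub, eval_X, eval_C]
    positivity

theorem nonneg_polynomial_eq_sum_two_squares (Q : Polynomial ℝ)
    (hQ : ∀ u : ℝ, 0 ≤ Q.eval u) :
    ∃ p₁ p₂ : Polynomial ℝ, Q = p₁ ^ 2 + p₂ ^ 2 := by
  induction hn : Q.natDegree using Nat.strong_induction_on generalizing Q with
  | _ n ih =>
    subst hn
    by_cases hdeg : Q.natDegree = 0
    · obtain ⟨c, rfl⟩ := natDegree_eq_zero.1 hdeg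
      have hc : 0 ≤ c := by simpa using hQ 0
      exact ⟨C √c, 0, by rw [← C_pow, Real.sq_sqrt hc, zero_pow two_ne_zero, add_zero]⟩
    · obtain ⟨a, b, R, rfl, hlt, hR⟩ := exists_eq_sq_add_sq_mul_of_nonneg hQ hdeg
      obtain ⟨q₁, q₂, hq⟩ := ih R.natDegree hlt R hR rfl
      exact sq_add_sq_mul rfl hq
end

section
/- For every continuous nondecreasing function f : ℝ → ℝ there exists a sequence (pₙ) of real polynomials, each nondecreasing on all of ℝ, such that pₙ(x) → f(x) as n → ∞ for every x ∈ ℝ. -/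
/-!
The antiderivative of the square of a polynomial is nondecreasing on all of `ℝ`. If `g` is `C¹` and
nondecreasing on `[a, b]`, approximating `√g'` by polynomials there makes their squares approximate
`g'`, so suitable antiderivatives of these squares approximate `g`. A general continuous
nondecreasing `f` on `[a, b]`, extended by constants outside, is approximated by such `g`: its
averages over `[x, x + h]` are `C¹`, inherit monotonicity, and tend to it uniformly as `h → 0⁺`.
-/

open Filter Polynomial Set

section Antiderivative

variable {K : Type*} [DivisionRing K] [CharZero K]

theorem polynomial_derivative_surjective : Function.Surjective (derivative : K[X] → K[X]) := by
  intro q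
  induction q using Polynomial.induction_on' with
  | add p q hp hq =>
    obtain ⟨P, rfl⟩ := hp
    obtain ⟨Q, rfl⟩ := hq
    exact ⟨P + Q, derivative_add⟩
  | monomial n a =>
    refine ⟨monomial (n + 1) (a / (n + 1 : ℕ)), ?_⟩
    rw [derivative_monomial_succ, ← Nat.cast_succ,
      div_mul_cancel₀ _ (Nat.cast_ne_zero.2 n.succ_ne_zero)]

theorem exists_polynomial_derivative_eq_and_eval_eq (q : K[X]) (x y : K) :
    ∃ p : K[X], derivative p = q ∧ p.eval x = y := by
  obtain ⟨p, rfl⟩ := polynomial_derivative_surjective q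
  exact ⟨p + C (y - p.eval x), by simp, by simp⟩

end Antiderivative

section ForwardAverage

variable {E : Type*} [NormedAddCommGroup E] [NormedSpace ℝ E]

/-- The forward (Steklov) average of `f` at scale `h`, whose value at `x` is the mean of `f` between
`x` and `x + h`; it smooths `f` while preserving monotonicity. At `h = 0` it is the junk value
`0`. -/
noncomputable def forwardAverage (f : ℝ → E) (h x : ℝ) : E :=
  ⨍ t in x..x + h, f t

theorem hasDerivAt_forwardAverage [CompleteSpace E] {f : ℝ → E} (hf : Continuous f) (h x : ℝ) :
    HasDerivAt (forwardAverage f h) (h⁻¹ • (f (x + h) - f x)) x := by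
  have hF : ∀ y, HasDerivAt (fun u => ∫ t in (0 : ℝ)..u, f t) (f y) y := fun y =>
    (hf.integral_hasStrictDerivAt 0 y).hasDerivAt
  have average_eq : forwardAverage f h =
      fun y => h⁻¹ • ((∫ t in (0 : ℝ)..y + h, f t) - ∫ t in (0 : ℝ)..y, f t) := by
    ext y
    rw [forwardAverage, interval_average_eq, add_sub_cancel_left,
      intervalIntegral.integral_interval_sub_left (hf.intervalIntegrable _ _)
        (hf.intervalIntegrable _ _)]
  rw [average_eq]
  exact (((hF (x + h)).comp_add_const x h).sub (hF x)).const_smul h⁻¹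

theorem contDiff_one_forwardAverage [CompleteSpace E] {f : ℝ → E} (hf : Continuous f) (h : ℝ) :
    ContDiff ℝ 1 (forwardAverage f h) := by
  refine contDiff_one_iff_deriv.2
    ⟨fun x => (hasDerivAt_forwardAverage hf h x).differentiableAt, ?_⟩
  rw [funext fun x => (hasDerivAt_forwardAverage hf h x).deriv]
  fun_prop

theorem monotone_forwardAverage {f : ℝ → ℝ} (hf : Continuous f) (hf_mono : Monotone f) {h : ℝ}
    (hh : 0 ≤ h) : Monotone (forwardAverage f h) :=
  monotone_of_hasDerivAt_nonneg (hasDerivAt_forwardAverage hf h) fun _ =>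
    mul_nonneg (inv_nonneg.2 hh) (sub_nonneg.2 (hf_mono (le_add_of_nonneg_right hh)))

theorem exists_contDiff_monotone_near_of_uniformContinuous {f : ℝ → ℝ} (hf : UniformContinuous f)
    (hf_mono : Monotone f) {ε : ℝ} (hε : 0 < ε) :
    ∃ g : ℝ → ℝ, ContDiff ℝ 1 g ∧ Monotone g ∧ ∀ x, |g x - f x| < ε := by
  obtain ⟨h, hh, hfh⟩ := Metric.uniformContinuous_iff.1 hf ε hε
  refine ⟨forwardAverage f h, contDiff_one_forwardAverage hf.continuous h,
    monotone_forwardAverage hf.continuous hf_mono hh.le, fun x => ?_⟩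
  obtain ⟨c, hc, hfc⟩ : ∃ c ∈ uIoo x (x + h), f c = forwardAverage f h x :=
    exists_eq_interval_average (lt_add_of_pos_right x hh).ne hf.continuous.continuousOn
  rw [uIoo_of_lt (lt_add_of_pos_right x hh)] at hc
  rw [← hfc]
  refine hfh ?_
  rw [Real.dist_eq, abs_of_pos (sub_pos.2 hc.1)]
  linarith [hc.2]

end ForwardAverage

theorem exists_polynomial_sq_near_of_continuousOn {g : ℝ → ℝ} {a b : ℝ}
    (hg : ContinuousOn g (Icc a b)) (hg_nonneg : ∀ x ∈ Icc a b, 0 ≤ g x) {ε : ℝ} (hε : 0 < ε) :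
    ∃ q : ℝ[X], ∀ x ∈ Icc a b, |q.eval x ^ 2 - g x| < ε := by
  let r : C(Icc a b, ℝ) := ⟨fun x => √(g x), hg.domRestrict.sqrt⟩
  obtain ⟨δ, hδ, hsq⟩ := Metric.continuousAt_iff.1 ((continuous_pow 2).continuousAt (x := r)) ε hε
  obtain ⟨q, hq⟩ := exists_polynomial_near_continuousMap a b r δ hδ
  refine ⟨q, fun x hx => ?_⟩
  have hqx : |q.eval x ^ 2 - √(g x) ^ 2| < ε :=
    (ContinuousMap.dist_apply_le_dist (⟨x, hx⟩ : Icc a b)).trans_lt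
      (hsq ((dist_eq_norm _ _).trans_lt hq))
  rwa [Real.sq_sqrt (hg_nonneg x hx)] at hqx

theorem exists_monotone_polynomial_near_of_hasDerivWithinAt {g g' : ℝ → ℝ} {a b : ℝ}
    (hg : ∀ x ∈ Icc a b, HasDerivWithinAt g (g' x) (Icc a b) x) (hg' : ContinuousOn g' (Icc a b))
    (hg'_nonneg : ∀ x ∈ Icc a b, 0 ≤ g' x) {ε : ℝ} (hε : 0 < ε) :
    ∃ p : ℝ[X], Monotone (fun x => p.eval x) ∧ ∀ x ∈ Icc a b, |p.eval x - g x| < ε := by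
  have hpos : 0 < |b - a| + 1 := by positivity
  obtain ⟨q, hq⟩ := exists_polynomial_sq_near_of_continuousOn hg' hg'_nonneg (div_pos hε hpos)
  obtain ⟨p, hp, hpa⟩ := exists_polynomial_derivative_eq_and_eval_eq (q ^ 2) a (g a)
  have hp_deriv : ∀ x, HasDerivAt (fun x => p.eval x) (q.eval x ^ 2) x := fun x => by
    simpa only [hp, eval_pow] using p.hasDerivAt x
  refine ⟨p, monotone_of_hasDerivAt_nonneg hp_deriv fun x => sq_nonneg _, fun x hx => ?_⟩
  calc |p.eval x - g x| = ‖(p.eval x - g x) - (p.eval a - g a)‖ := by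
        rw [hpa, sub_self, sub_zero, Real.norm_eq_abs]
    _ ≤ ε / (|b - a| + 1) * (x - a) :=
        norm_image_sub_le_of_norm_deriv_le_segment'
          (fun y hy => (hp_deriv y).hasDerivWithinAt.sub (hg y hy))
          (fun y hy => (hq y (Ico_subset_Icc_self hy)).le) x hx
    _ < ε / (|b - a| + 1) * (|b - a| + 1) := by
        gcongr
        linarith [hx.2, le_abs_self (b - a)]
    _ = ε := div_mul_cancel₀ ε hpos.ne'

theorem exists_monotone_polynomial_near_of_continuousOn {f : ℝ → ℝ} {a b : ℝ}
    (hf : ContinuousOn f (Icc a b)) (hf_mono : MonotoneOn f (Icc a b)) {ε : ℝ} (hε : 0 < ε) :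
    ∃ p : ℝ[X], Monotone (fun x => p.eval x) ∧ ∀ x ∈ Icc a b, |p.eval x - f x| < ε := by
  rcases lt_or_ge b a with hba | hab
  · exact ⟨0, by simp only [eval_zero, monotone_const], by simp [Icc_eq_empty_of_lt hba]⟩
  have hF : UniformContinuous (IccExtend hab ((Icc a b).domRestrict f)) :=
    (CompactSpace.uniformContinuous_of_continuous hf.domRestrict).comp
      (LipschitzWith.projIcc hab).uniformContinuous
  have hF_mono : Monotone (IccExtend hab ((Icc a b).domRestrict f)) :=
    Monotone.IccExtend hab (monotoneOn_iff_monotone.1 hf_mono)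
  obtain ⟨g, hg, hg_mono, hgF⟩ :=
    exists_contDiff_monotone_near_of_uniformContinuous hF hF_mono (half_pos hε)
  obtain ⟨p, hp_mono, hpg⟩ := exists_monotone_polynomial_near_of_hasDerivWithinAt (a := a) (b := b)
    (fun x _ => (hg.differentiable_one x).hasDerivAt.hasDerivWithinAt)
    hg.continuous_deriv_one.continuousOn (fun _ _ => hg_mono.deriv_nonneg) (half_pos hε)
  refine ⟨p, hp_mono, fun x hx => ?_⟩
  have hgf : |g x - f x| < ε / 2 := by
    simpa only [IccExtend_of_mem hab _ hx, domRestrict_apply] using hgF x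
  calc |p.eval x - f x| ≤ |p.eval x - g x| + |g x - f x| := abs_sub_le _ _ _
    _ < ε / 2 + ε / 2 := add_lt_add (hpg x hx) hgf
    _ = ε := add_halves ε

theorem monotone_continuous_pointwise_limit_of_monotone_polynomials
    (f : ℝ → ℝ) (hf_cont : Continuous f) (hf_mono : Monotone f) :
    ∃ p : ℕ → Polynomial ℝ,
      (∀ n, Monotone (fun x : ℝ => (p n).eval x)) ∧
      ∀ x : ℝ, Filter.Tendsto (fun n => (p n).eval x) Filter.atTop (nhds (f x)) := by
  have approx (n : ℕ) : ∃ p : ℝ[X], Monotone (fun x => p.eval x) ∧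
      ∀ x ∈ Icc (-n : ℝ) n, |p.eval x - f x| < 1 / ((n : ℝ) + 1) :=
    exists_monotone_polynomial_near_of_continuousOn hf_cont.continuousOn (hf_mono.monotoneOn _)
      Nat.one_div_pos_of_nat
  choose p hp_mono hp_near using approx
  refine ⟨p, hp_mono, fun x => tendsto_iff_dist_tendsto_zero.2 ?_⟩
  have dist_le : ∀ᶠ n : ℕ in atTop, dist ((p n).eval x) (f x) ≤ 1 / ((n : ℝ) + 1) := by
    filter_upwards [tendsto_natCast_atTop_atTop.eventually_ge_atTop |x|] with n hn
    exact (hp_near n x (abs_le.1 hn)).le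
  exact squeeze_zero' (.of_forall fun _ => dist_nonneg) dist_le
    tendsto_one_div_add_atTop_nhds_zero_nat
end
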